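/- The only integer solutions of the equation x⁴ + x*y + 2*y³ = 0 are (x, y) = (0, 0) and (x, y) = (-1, -1). -/

import Mathlib

structure GoodRoot {R : Type*} [CommRing R] (z : R) : Prop where
  cyc : 1 + z + z ^ 2 + z ^ 3 + z ^ 4 = 0
  pl : Prime (1 - z)
  res : ∀ x : R, ∃ n : ℤ, (1 - z) ∣ x - n
  two : Prime (2 : R)
  unit : ∃ η : Rˣ, ∀ ε : Rˣ, ∃ e : ℤ, (ε * η ^ (-e)) ^ 10 = 1

set_option linter.unusedSectionVars false

namespace GoodRoot

variable {R : Type*} [CommRing R] [IsDomain R] {z : R}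

theorem z5 (h : GoodRoot z) : z ^ 5 = 1 := by
  have := h.cyc
  linear_combination (z - 1) * this

theorem unit_z (h : GoodRoot z) : ∃ u : Rˣ, (u : R) = z :=
  ⟨⟨z, z ^ 4, by linear_combination h.z5, by linear_combination h.z5⟩, rfl⟩

theorem one_add (h : GoodRoot z) (i : ℕ) (h0 : i ≠ 0) (h5 : i < 5) :
    ∃ u : Rˣ, (u : R) = 1 + z ^ i := by
  have hc := h.cyc
  have key : (1 + z ^ i) * (-(z ^ i + (z ^ i) ^ 3)) = 1 := by
    interval_cases i <;> grind
  exact ⟨⟨_, _, key, by rw [mul_comm]; exact key⟩, rfl⟩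

theorem one_sub (h : GoodRoot z) (i : ℕ) (h0 : i ≠ 0) (h5 : i < 5) :
    ∃ u : Rˣ, 1 - z ^ i = (1 - z) * u := by
  have hc := h.cyc
  obtain ⟨v, hv⟩ := h.one_add 1 (by norm_num) (by norm_num)
  obtain ⟨w, hw⟩ := h.one_add 2 (by norm_num) (by norm_num)
  obtain ⟨y, hy⟩ := h.unit_z
  interval_cases i
  · exact absurd rfl h0
  · exact ⟨1, by simp⟩
  · exact ⟨v, by rw [hv]; ring⟩
  · exact ⟨-v * y ^ 3, by push_cast; rw [hv, hy]; grind⟩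
  · exact ⟨v * w, by push_cast; rw [hv, hw]; ring⟩

theorem sub_pow (h : GoodRoot z) (i j : ℕ) (hi : i < 5) (hj : j < 5) (hij : i ≠ j) :
    ∃ u : Rˣ, z ^ i - z ^ j = (1 - z) * u := by
  obtain ⟨y, hy⟩ := h.unit_z
  rcases lt_or_gt_of_ne hij with hlt | hlt
  · obtain ⟨u, hu⟩ := h.one_sub (j - i) (by omega) (by omega)
    refine ⟨u * y ^ i, ?_⟩
    push_cast
    rw [hy, ← mul_assoc, ← hu, sub_mul, ← pow_add]
    congr 2
    · simp
    · omega
  · obtain ⟨u, hu⟩ := h.one_sub (i - j) (by omega) (by omega)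
    refine ⟨-u * y ^ j, ?_⟩
    push_cast
    rw [hy]
    have : z ^ i = z ^ (i - j) * z ^ j := by rw [← pow_add]; congr 1; omega
    rw [this]
    linear_combination (-z ^ j) * hu

theorem five (h : GoodRoot z) : ∃ u : Rˣ, (5 : R) = (1 - z) ^ 4 * u := by
  have hc := h.cyc
  obtain ⟨u2, h2⟩ := h.one_sub 2 (by norm_num) (by norm_num)
  obtain ⟨u3, h3⟩ := h.one_sub 3 (by norm_num) (by norm_num)
  obtain ⟨u4, h4⟩ := h.one_sub 4 (by norm_num) (by norm_num)
  refine ⟨u2 * u3 * u4, ?_⟩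
  have : (5 : R) = (1 - z) * (1 - z ^ 2) * (1 - z ^ 3) * (1 - z ^ 4) := by grind
  rw [this, h2, h3, h4]
  push_cast
  ring

theorem dvd_int (h : GoodRoot z) (n : ℤ) (hn : (1 - z) ∣ (n : R)) : (5 : ℤ) ∣ n := by
  by_contra hc
  have : IsCoprime (5 : ℤ) n := (Nat.prime_iff_prime_int.mp (by norm_num : Nat.Prime 5)).coprime_iff_not_dvd.mpr hc
  obtain ⟨a, b, hab⟩ := this
  obtain ⟨u, hu⟩ := h.five
  apply h.pl.not_isUnit
  apply isUnit_of_dvd_one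
  have h1 : (1 : R) = (a : R) * 5 + b * n := by exact_mod_cast congrArg (Int.cast : ℤ → R) hab.symm
  have h2 : (1 - z) ∣ (a : R) * 5 + b * n := by
    refine dvd_add (dvd_mul_of_dvd_right ?_ _) (dvd_mul_of_dvd_right hn _)
    rw [hu]
    exact dvd_mul_of_dvd_left (dvd_pow_self _ (by norm_num)) _
  rwa [← h1] at h2

theorem dvd_five (h : GoodRoot z) : (1 - z) ^ 4 ∣ (5 : R) := by
  obtain ⟨u, hu⟩ := h.five
  exact ⟨u, hu⟩

theorem int_dvd (h : GoodRoot z) (n : ℤ) (hn : (5 : ℤ) ∣ n) : (1 - z) ^ 4 ∣ (n : R) := by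
  obtain ⟨k, rfl⟩ := hn
  push_cast
  exact dvd_mul_of_dvd_left h.dvd_five _

theorem dvd_int5 (h : GoodRoot z) (n : ℤ) (hn : (1 - z) ^ 5 ∣ (n : R)) : (25 : ℤ) ∣ n := by
  obtain ⟨k, rfl⟩ := h.dvd_int n ((dvd_pow_self _ (by norm_num)).trans hn)
  obtain ⟨u, hu⟩ := h.five
  push_cast at hn
  rw [hu, pow_succ, mul_assoc] at hn
  have := (mul_dvd_mul_iff_left (pow_ne_zero 4 h.pl.ne_zero)).mp hn
  have := h.dvd_int k ((Units.dvd_mul_left).mp this)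
  omega

/-- Fifth powers of congruent elements. -/
theorem pow_congr (h : GoodRoot z) (m : ℕ) (hm : 1 ≤ m) (a b : R) (hab : (1 - z) ^ m ∣ a - b) :
    (1 - z) ^ (m + 4) ∣ a ^ 5 - b ^ 5 := by
  obtain ⟨c, hc⟩ := hab
  obtain ⟨d, hd⟩ := h.dvd_five
  obtain ⟨t, rfl⟩ : ∃ t, m = t + 1 := ⟨m - 1, by omega⟩
  have ha : a = b + (1 - z) ^ (t + 1) * c := by linear_combination hc
  refine ⟨d * (b ^ 4 * c + 2 * b ^ 3 * (1 - z) ^ (t + 1) * c ^ 2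
    + 2 * b ^ 2 * ((1 - z) ^ (t + 1)) ^ 2 * c ^ 3 + b * ((1 - z) ^ (t + 1)) ^ 3 * c ^ 4)
    + ((1 - z) ^ t) ^ 4 * c ^ 5, ?_⟩
  rw [ha]
  generalize hl : 1 - z = l at *
  have e1 : l ^ (t + 1) = l ^ t * l := pow_succ _ _
  have e2 : l ^ (t + 1 + 4) = l ^ t * l ^ 5 := by rw [add_assoc, pow_add]
  rw [e1, e2]
  generalize l ^ t = s
  linear_combination (b ^ 4 * s * l * c + 2 * b ^ 3 * (s * l) ^ 2 * c ^ 2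
    + 2 * b ^ 2 * (s * l) ^ 3 * c ^ 3 + b * (s * l) ^ 4 * c ^ 4) * hd

theorem pow_int (h : GoodRoot z) (a : R) :
    ∃ n : ℤ, (1 - z) ∣ a - n ∧ (1 - z) ^ 5 ∣ a ^ 5 - (n : R) ^ 5 := by
  obtain ⟨n, hn⟩ := h.res a
  exact ⟨n, hn, by simpa using h.pow_congr 1 le_rfl a n (by simpa using hn)⟩

theorem adjust (h : GoodRoot z) (a b : R) (hb : ¬ (1 - z) ∣ b) (hab : (1 - z) ∣ a ^ 5 - b ^ 5) :
    ∃ k : ℕ, (1 - z) ^ 2 ∣ a - z ^ k * b := by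
  have h1 : (1 - z) ∣ a - b := by
    apply h.pl.dvd_of_dvd_pow (n := 5)
    have e : (a - b) ^ 5 = (a ^ 5 - b ^ 5) + 5 * (-a ^ 4 * b + 2 * a ^ 3 * b ^ 2 - 2 * a ^ 2 * b ^ 3
      + a * b ^ 4) := by ring
    rw [e]
    exact dvd_add hab (dvd_mul_of_dvd_left ((dvd_pow_self _ (by norm_num)).trans h.dvd_five) _)
  obtain ⟨c, hc⟩ := h1
  obtain ⟨n, hn⟩ := h.res b
  obtain ⟨m, hm⟩ := h.res c
  have hn5 : ¬ (5 : ℤ) ∣ n := by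
    intro h5
    apply hb
    have := dvd_add hn ((dvd_pow_self _ (by norm_num)).trans (h.int_dvd n h5))
    simpa using this
  have hk : ∃ k : ℕ, (5 : ℤ) ∣ m + k * n := by
    have h0 : n % 5 = 1 ∨ n % 5 = 2 ∨ n % 5 = 3 ∨ n % 5 = 4 := by omega
    refine ⟨((4 * m * n ^ 3) % 5).toNat, ?_⟩
    rw [Int.toNat_of_nonneg (Int.emod_nonneg _ (by norm_num))]
    apply Int.dvd_of_emod_eq_zero
    have h1 : m % 5 = 0 ∨ m % 5 = 1 ∨ m % 5 = 2 ∨ m % 5 = 3 ∨ m % 5 = 4 := by omega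
    rcases h0 with h0 | h0 | h0 | h0 <;> rcases h1 with h1 | h1 | h1 | h1 | h1 <;>
      simp [Int.add_emod, Int.mul_emod, pow_succ, h0, h1]
  obtain ⟨k, hk⟩ := hk
  refine ⟨k, ?_⟩
  have hz : (1 - z) ^ 2 ∣ z ^ k - (1 - k * (1 - z)) := by
    clear hk
    induction k with
    | zero => simp
    | succ k ih =>
      obtain ⟨d, hd⟩ := ih
      refine ⟨z * d + k, ?_⟩
      push_cast
      rw [pow_succ]
      linear_combination z * hd
  obtain ⟨d, hd⟩ := hz
  have : (1 - z) ∣ c + k * b := by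
    have h3 := (dvd_pow_self (1 - z) (by norm_num : 4 ≠ 0)).trans (h.int_dvd _ hk)
    push_cast at h3
    have := dvd_add (dvd_add hm (dvd_mul_of_dvd_right hn (k : R))) h3
    convert this using 1
    ring
  obtain ⟨e, he⟩ := this
  refine ⟨e - d * b, ?_⟩
  linear_combination hc + (1 - z) * he - b * hd



theorem coef_step (h : GoodRoot z) (k : ℕ) (hk : k ≤ 3) (A : ℤ) (X : R)
    (hd : (1 - z) ^ (k + 1) ∣ (A : R) + (1 - z) * X) : (5 : ℤ) ∣ A ∧ (1 - z) ^ k ∣ X := by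
  have h1 : (5 : ℤ) ∣ A := by
    apply h.dvd_int
    have := (dvd_pow_self (1 - z) (Nat.succ_ne_zero k)).trans hd
    exact (dvd_add_left (Dvd.intro X rfl)).mp this
  refine ⟨h1, ?_⟩
  have h2 : (1 - z) ^ (k + 1) ∣ (A : R) := (pow_dvd_pow _ (by omega)).trans (h.int_dvd A h1)
  have h3 := (dvd_add_right h2).mp hd
  rw [pow_succ'] at h3
  exact (mul_dvd_mul_iff_left h.pl.ne_zero).mp h3

theorem expand (z : R) (a b : ℕ) : ∃ X : R, 48 * (z ^ a * (1 + z) ^ b) =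
    2 ^ b * (48 - (48 * a + 24 * b) * (1 - z)
      + 6 * (b * (b - 1) + 4 * a * b + 4 * a * (a - 1)) * (1 - z) ^ 2
      - (8 * a * (a - 1) * (a - 2) + 12 * a * (a - 1) * b + 6 * a * b * (b - 1)
        + b * (b - 1) * (b - 2)) * (1 - z) ^ 3) + (1 - z) ^ 4 * X := by
  induction b with
  | zero =>
    induction a with
    | zero => exact ⟨0, by simp⟩
    | succ a ih =>
      obtain ⟨X, hX⟩ := ih
      refine ⟨z * X + (8 * a * (a - 1) * (a - 2)), ?_⟩
      push_cast at hX ⊢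
      rw [pow_succ]
      linear_combination z * hX
  | succ b ih =>
    obtain ⟨X, hX⟩ := ih
    refine ⟨(1 + z) * X + 2 ^ b * (8 * a * (a - 1) * (a - 2) + 12 * a * (a - 1) * b
      + 6 * a * b * (b - 1) + b * (b - 1) * (b - 2)), ?_⟩
    push_cast at hX ⊢
    rw [pow_succ, pow_succ]
    linear_combination (1 + z) * hX

theorem coef4 (h : GoodRoot z) (A B C D : ℤ) (hd : (1 - z) ^ 4 ∣
    (A : R) + B * (1 - z) + C * (1 - z) ^ 2 + D * (1 - z) ^ 3) :
    (5 : ℤ) ∣ A ∧ (5 : ℤ) ∣ B ∧ (5 : ℤ) ∣ C ∧ (5 : ℤ) ∣ D := by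
  obtain ⟨h1, h2⟩ := h.coef_step 3 le_rfl A (B + (1 - z) * (C + (1 - z) * D))
    (by convert hd using 1; ring)
  obtain ⟨h3, h4⟩ := h.coef_step 2 (by norm_num) _ _ h2
  obtain ⟨h5, h6⟩ := h.coef_step 1 (by norm_num) _ _ h4
  exact ⟨h1, h3, h5, h.dvd_int _ (by simpa using h6)⟩

theorem coef3 (h : GoodRoot z) (A B C : ℤ) (hd : (1 - z) ^ 3 ∣
    (A : R) + B * (1 - z) + C * (1 - z) ^ 2) :
    (5 : ℤ) ∣ A ∧ (5 : ℤ) ∣ B ∧ (5 : ℤ) ∣ C := by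
  obtain ⟨h1, h2⟩ := h.coef_step 2 (by norm_num) A (B + (1 - z) * C)
    (by convert hd using 1; ring)
  obtain ⟨h3, h4⟩ := h.coef_step 1 (by norm_num) _ _ h2
  exact ⟨h1, h3, h.dvd_int _ (by simpa using h4)⟩

theorem p5 : Prime (5 : ℤ) := Nat.prime_iff_prime_int.mp (by norm_num : Nat.Prime 5)

theorem strip {b : ℕ} {m c : ℤ} (hm : ¬ (5 : ℤ) ∣ m) (hd : (5 : ℤ) ∣ m * 2 ^ b * c) :
    (5 : ℤ) ∣ c := by
  rcases p5.dvd_or_dvd hd with h1 | h1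
  · rcases p5.dvd_or_dvd h1 with h2 | h2
    · exact absurd h2 hm
    · have := p5.dvd_of_dvd_pow h2
      omega
  · exact h1

theorem exps (h : GoodRoot z) (a b : ℕ) (m n : ℤ) (hm : ¬ (5 : ℤ) ∣ m)
    (hd : (1 - z) ^ 3 ∣ z ^ a * (1 + z) ^ b * m - n) : 5 ∣ a ∧ 5 ∣ b := by
  obtain ⟨X, hX⟩ := expand z a b
  obtain ⟨Y, hY⟩ := hd
  obtain ⟨-, h1, h2⟩ := h.coef3 (m * 2 ^ b * 48 - 48 * n) (m * 2 ^ b * -(48 * a + 24 * b))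
    (m * 2 ^ b * (6 * (b * (b - 1) + 4 * a * b + 4 * a * (a - 1)))) (by
      refine ⟨48 * Y - m * (1 - z) * X + m * 2 ^ b * (8 * a * (a - 1) * (a - 2)
        + 12 * a * (a - 1) * b + 6 * a * b * (b - 1) + b * (b - 1) * (b - 2)), ?_⟩
      push_cast
      linear_combination 48 * hY - m * hX)
  have h1 := strip hm h1
  have h2 := strip hm h2
  obtain ⟨k, hk⟩ : (5 : ℤ) ∣ b + 2 * a := by omega
  have hb : (b : ℤ) = 5 * k - 2 * a := by linarith
  rw [hb] at h2
  have h3 : (5 : ℤ) ∣ -12 * a := by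
    have e : (6 * ((5 * k - 2 * a) * ((5 * k - 2 * a) - 1) + 4 * a * (5 * k - 2 * a)
      + 4 * a * (a - 1)) : ℤ) = -12 * a + 5 * (6 * (k * (5 * k - 1))) := by ring
    rw [e] at h2
    exact (dvd_add_left (Dvd.intro _ rfl)).mp h2
  omega

theorem not_dvd_unit (h : GoodRoot z) (u : Rˣ) : ¬ (1 - z) ∣ (u : R) := fun hd =>
  h.pl.not_isUnit (isUnit_of_dvd_unit hd u.isUnit)

theorem not_dvd_int (h : GoodRoot z) {a : R} {n : ℤ} (ha : ¬ (1 - z) ∣ a) (hn : (1 - z) ∣ a - n) :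
    ¬ (5 : ℤ) ∣ n := by
  intro h5
  apply ha
  have := dvd_add hn ((dvd_pow_self _ (by norm_num)).trans (h.int_dvd n h5))
  simpa using this

theorem torsion_form (h : GoodRoot z) (y : Rˣ) (hy : (y : R) = z) (t : Rˣ) (ht : t ^ 10 = 1) :
    ∃ a : ℕ, ∃ w : Rˣ, t = y ^ a * w ^ 5 := by
  have hc := h.cyc
  have h1 : ((t : R) ^ 2) ^ 5 = 1 := by
    have : ((t ^ 10 : Rˣ) : R) = 1 := by rw [ht]; rfl
    push_cast at this
    rw [← this]; ring
  generalize hs : (t : R) ^ 2 = s at h1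
  have h2 : (s - 1) * ((s - z) * ((s - z ^ 2) * ((s - z ^ 3) * (s - z ^ 4)))) = 0 := by
    grind
  have h3 : ∃ a : ℕ, s = z ^ a := by
    simp only [mul_eq_zero, sub_eq_zero] at h2
    rcases h2 with h2 | h2 | h2 | h2 | h2
    · exact ⟨0, by simpa using h2⟩
    · exact ⟨1, by simpa using h2⟩
    · exact ⟨2, h2⟩
    · exact ⟨3, h2⟩
    · exact ⟨4, h2⟩
  obtain ⟨a, ha⟩ := h3
  have h4 : t ^ 2 = y ^ a := by
    ext
    push_cast
    rw [hs, ha, hy]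
  refine ⟨3 * a, t⁻¹, ?_⟩
  rw [mul_comm 3 a, pow_mul, ← h4]
  simp only [inv_pow, ← pow_mul]
  rw [eq_mul_inv_iff_mul_eq, ← pow_succ']

theorem unit_form (h : GoodRoot z) (y v : Rˣ) (hy : (y : R) = z) (hv : (v : R) = 1 + z) (ε : Rˣ) :
    ∃ a b : ℕ, ∃ w : Rˣ, ε = y ^ a * v ^ b * w ^ 5 := by
  obtain ⟨η, hη⟩ := h.unit
  have form : ∀ ε : Rˣ, ∃ a : ℕ, ∃ w : Rˣ, ∃ e : ℤ, ε = y ^ a * w ^ 5 * η ^ e := by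
    intro ε
    obtain ⟨e, he⟩ := hη ε
    obtain ⟨a, w, hw⟩ := h.torsion_form y hy _ he
    exact ⟨a, w, e, by rw [← hw]; simp⟩
  obtain ⟨a, w, e, hve⟩ := form v
  have hy5 : y ^ 5 = 1 := by ext; push_cast; rw [hy, h.z5]
  have he5 : ¬ (5 : ℤ) ∣ e := by
    rintro ⟨f, rfl⟩
    have h1 : y ^ (4 * a) * v = (w * η ^ f) ^ 5 := by
      rw [hve, mul_pow, ← zpow_natCast (η ^ f), ← zpow_mul, mul_comm f, ← mul_assoc, ← mul_assoc,
        ← pow_add, show 4 * a + a = 5 * a by ring, pow_mul, hy5]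
      simp
    obtain ⟨n, hn, hn5⟩ := h.pow_int ((w * η ^ f : Rˣ) : R)
    have h2 := congrArg (Units.val) h1
    rw [Units.val_pow_eq_pow_val] at h2
    push_cast at h2 hn5
    rw [← h2, hy, hv] at hn5
    have := h.exps (4 * a) 1 1 (n ^ 5) (by norm_num) (by
      refine (pow_dvd_pow _ (by norm_num : 3 ≤ 5)).trans ?_
      simpa using hn5)
    omega
  have hco : IsCoprime e 5 := (p5.coprime_iff_not_dvd.mpr he5).symm
  obtain ⟨s, t, hst⟩ := hco
  have hηf : η = v ^ s * y ^ (-(a * s : ℤ)) * (w ^ (-s) * η ^ t) ^ 5 := by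
    have h1 : η = (η ^ e) ^ s * (η ^ t) ^ 5 := by
      rw [← zpow_natCast, ← zpow_mul, ← zpow_mul, ← zpow_add, mul_comm e]
      push_cast
      rw [hst, zpow_one]
    have key : ∀ Y W E T : Rˣ, E * T = Y * W * E * Y⁻¹ * (W⁻¹ * T) := by
      intro Y W E T
      calc E * T = (Y * Y⁻¹) * (W * W⁻¹) * (E * T) := by simp
        _ = _ := by ac_rfl
    have e1 : y ^ (-(a * s : ℤ)) = ((y ^ a) ^ s)⁻¹ := by
      rw [zpow_neg, zpow_mul, zpow_natCast]
    have e2 : (w ^ (-s)) ^ 5 = ((w ^ 5) ^ s)⁻¹ := by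
      rw [zpow_neg, inv_pow, ← zpow_natCast, ← zpow_natCast, ← zpow_mul, ← zpow_mul, mul_comm]
    nth_rewrite 1 [h1]
    rw [mul_pow, e1, e2, hve, mul_zpow, mul_zpow]
    exact key _ _ _ _
  have toNat : ∀ (g : Rˣ) (k : ℤ), ∃ n : ℕ, ∃ u : Rˣ, g ^ k = g ^ n * u ^ 5 := by
    intro g k
    refine ⟨(k % 5).toNat, g ^ (k / 5), ?_⟩
    rw [← zpow_natCast, ← zpow_natCast, ← zpow_mul, ← zpow_add,
      Int.toNat_of_nonneg (Int.emod_nonneg _ (by norm_num))]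
    congr 1
    push_cast
    omega
  obtain ⟨a', w', e', hε⟩ := form ε
  obtain ⟨n1, u1, h1⟩ := toNat v (s * e')
  obtain ⟨n2, u2, h2⟩ := toNat y (-(a * s) * e')
  refine ⟨a' + n2, n1, w' * u1 * u2 * (w ^ (-s) * η ^ t) ^ e', ?_⟩
  rw [hε]
  nth_rewrite 1 [hηf]
  rw [mul_zpow, mul_zpow, ← zpow_mul, ← zpow_mul, h1, h2, pow_add]
  generalize w ^ (-s) * η ^ t = q
  have : (q ^ 5) ^ e' = (q ^ e') ^ 5 := by
    rw [← zpow_natCast, ← zpow_natCast, ← zpow_mul, ← zpow_mul, mul_comm]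
  rw [this]
  simp only [mul_pow]
  have key : ∀ A B C D E F G : Rˣ, A * D * ((C * E) * (B * F) * G) = A * B * C * (D * E * F * G) := by
    intros
    ac_rfl
  exact key _ _ _ _ _ _ _

/-- Kummer type lemma. -/
theorem kummer (h : GoodRoot z) (p q : Rˣ) (n : ℤ) (a b : R) (ha : ¬ (1 - z) ∣ a)
    (hd : (1 - z) ^ 3 ∣ p * a ^ 5 - n * q * b ^ 5) : ∃ w : Rˣ, p = q * w ^ 5 := by
  obtain ⟨y, hy⟩ := h.unit_z
  obtain ⟨v, hv⟩ := h.one_add 1 (by norm_num) (by norm_num)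
  rw [pow_one] at hv
  obtain ⟨s, t, w, hw⟩ := h.unit_form y v hy hv (p * q⁻¹)
  obtain ⟨m, hm1, hm⟩ := h.pow_int ((w : R) * a)
  obtain ⟨k, -, hk⟩ := h.pow_int b
  have hm5 : ¬ (5 : ℤ) ∣ m := h.not_dvd_int (by
    intro hc
    exact ha ((Units.dvd_mul_left).mp hc)) hm1
  have hp : (p : R) = q * (z ^ s * (1 + z) ^ t * w ^ 5) := by
    have : p = q * (y ^ s * v ^ t * w ^ 5) := by rw [← hw]; simp [mul_comm]
    rw [this]; push_cast; rw [hy, hv]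
  rw [hp] at hd
  have hd2 : (1 - z) ^ 3 ∣ z ^ s * (1 + z) ^ t * (w * a) ^ 5 - n * b ^ 5 := by
    rw [← Units.dvd_mul_left (u := q)]
    convert hd using 1
    ring
  have hm' := (pow_dvd_pow (1 - z) (by norm_num : 3 ≤ 5)).trans hm
  have hk' := (pow_dvd_pow (1 - z) (by norm_num : 3 ≤ 5)).trans hk
  obtain ⟨c1, hc1⟩ := hm'
  obtain ⟨c2, hc2⟩ := hk'
  obtain ⟨c3, hc3⟩ := hd2
  obtain ⟨⟨s', rfl⟩, ⟨t', rfl⟩⟩ := h.exps s t (m ^ 5) (n * k ^ 5) (fun hc => hm5 (p5.dvd_of_dvd_pow hc))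
    ⟨c3 + n * c2 - z ^ s * (1 + z) ^ t * c1, by
      push_cast
      linear_combination hc3 + n * hc2 - z ^ s * (1 + z) ^ t * hc1⟩
  refine ⟨y ^ s' * v ^ t' * w, ?_⟩
  rw [mul_pow, mul_pow, ← pow_mul, ← pow_mul, mul_comm s', mul_comm t', ← hw]
  simp [mul_comm]

theorem no_two (h : GoodRoot z) (s : ℕ) (hs : s = 1 ∨ s = 3) (a b : R) (ha : ¬ (1 - z) ∣ a)
    (hd : (1 - z) ^ 5 ∣ 2 ^ s * a ^ 5 - b ^ 5) : False := by
  obtain ⟨m, hm1, c1, hm⟩ := h.pow_int a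
  obtain ⟨n, hn1, c2, hn⟩ := h.pow_int b
  have hm5 : ¬ (5 : ℤ) ∣ m := h.not_dvd_int ha hm1
  obtain ⟨c3, hc3⟩ := hd
  have := h.dvd_int5 (2 ^ s * m ^ 5 - n ^ 5) ⟨c3 + c2 - 2 ^ s * c1, by
    push_cast
    linear_combination hc3 + hn - 2 ^ s * hm⟩
  have key : ∀ m n : ZMod 25, (2 * m ^ 5 - n ^ 5 = 0 ∨ 8 * m ^ 5 - n ^ 5 = 0) → 5 * m = 0 := by
    decide +kernel
  have h25 := (ZMod.intCast_zmod_eq_zero_iff_dvd (2 ^ s * m ^ 5 - n ^ 5) 25).mpr (by exact_mod_cast this)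
  have h5 := key m n (by
    rcases hs with rfl | rfl
    · left; push_cast at h25; simpa using h25
    · right; push_cast at h25; simpa using h25)
  have := (ZMod.intCast_zmod_eq_zero_iff_dvd (5 * m) 25).mp (by exact_mod_cast h5)
  omega


variable [IsPrincipalIdealRing R]

theorem factor_pair (h : GoodRoot z) (s : ℕ) (hs : s ≠ 0) (a b Z : R) (e : Rˣ) (hab : IsCoprime a b)
    (he : a * b = e * 2 ^ s * Z ^ 5) :
    ((2 : R) ∣ a ∧ ∃ (E : Rˣ) (α : R), a = E * 2 ^ s * α ^ 5) ∨
    (¬ (2 : R) ∣ a ∧ ∃ (E : Rˣ) (α : R), a = E * α ^ 5) := by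
  have h2s : (2 : R) ^ s ≠ 0 := pow_ne_zero _ h.two.ne_zero
  have hdv : (2 : R) ^ s ∣ a * b := by rw [he]; exact ⟨e * Z ^ 5, by ring⟩
  by_cases h2 : (2 : R) ∣ a
  · left
    refine ⟨h2, ?_⟩
    have hb : ¬ (2 : R) ∣ b := fun hb => h.two.not_isUnit (hab.isUnit_of_dvd' h2 hb)
    have hco : IsCoprime ((2 : R) ^ s) b := (h.two.coprime_iff_not_dvd.mpr hb).pow_left
    obtain ⟨c, rfl⟩ := hco.dvd_of_dvd_mul_right hdv
    have hcb : IsCoprime c b := hab.of_mul_left_right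
    have h3 : c * b = e * Z ^ 5 := by
      apply mul_left_cancel₀ h2s
      linear_combination he
    obtain ⟨d, u, hd⟩ := exists_associated_pow_of_associated_pow_mul (k := 5) (c := Z) hcb
      ⟨e, by rw [h3]; ring⟩
    exact ⟨u, d, by rw [← hd]; ring⟩
  · right
    refine ⟨h2, ?_⟩
    have hco : IsCoprime ((2 : R) ^ s) a := (h.two.coprime_iff_not_dvd.mpr h2).pow_left
    obtain ⟨c, rfl⟩ := hco.dvd_of_dvd_mul_left hdv
    have hcb : IsCoprime a c := hab.of_mul_right_right
    have h3 : a * c = e * Z ^ 5 := by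
      apply mul_left_cancel₀ h2s
      linear_combination he
    obtain ⟨d, u, hd⟩ := exists_associated_pow_of_associated_pow_mul (k := 5) (c := Z) hcb
      ⟨e, by rw [h3]; ring⟩
    exact ⟨u, d, by rw [← hd]; ring⟩

theorem factor (h : GoodRoot z) (s : ℕ) (hs : s ≠ 0) (y : ℕ → R) (Z : R) (e : Rˣ)
    (hy : ∀ i < 5, ∀ j < 5, i ≠ j → IsCoprime (y i) (y j))
    (he : y 0 * y 1 * y 2 * y 3 * y 4 = e * 2 ^ s * Z ^ 5) :
    ∃ j < 5, ∃ (E : ℕ → Rˣ) (α : ℕ → R), y j = E j * 2 ^ s * α j ^ 5 ∧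
      ∀ i < 5, i ≠ j → y i = E i * α i ^ 5 := by
  have hp : ∏ i ∈ Finset.range 5, y i = e * 2 ^ s * Z ^ 5 := by
    rw [← he]; simp [Finset.prod_range_succ]
  have hd : ∃ j ∈ Finset.range 5, (2 : R) ∣ y j := by
    apply h.two.exists_mem_finset_dvd
    rw [hp]
    exact dvd_mul_of_dvd_left (dvd_mul_of_dvd_right (dvd_pow_self _ hs) _) _
  obtain ⟨j, hj, h2j⟩ := hd
  have hj5 := Finset.mem_range.mp hj
  have each : ∀ i, ∃ (E : Rˣ) (α : R), i < 5 → (i = j → y i = E * 2 ^ s * α ^ 5) ∧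
      (i ≠ j → y i = E * α ^ 5) := by
    intro i
    by_cases hi : i < 5
    · have hi' := Finset.mem_range.mpr hi
      have hco : IsCoprime (y i) (∏ k ∈ (Finset.range 5).erase i, y k) := by
        apply IsCoprime.prod_right
        intro k hk
        rw [Finset.mem_erase, Finset.mem_range] at hk
        exact hy i hi k hk.2 hk.1.symm
      rw [← Finset.mul_prod_erase _ _ hi'] at hp
      rcases h.factor_pair s hs _ _ Z e hco hp with ⟨h2, E, α, hE⟩ | ⟨h2, E, α, hE⟩
      · refine ⟨E, α, fun _ => ⟨fun _ => hE, fun hne => ?_⟩⟩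
        exact absurd ((hy i hi j hj5 hne).isUnit_of_dvd' h2 h2j) h.two.not_isUnit
      · refine ⟨E, α, fun _ => ⟨fun heq => ?_, fun _ => hE⟩⟩
        subst heq
        exact absurd h2j h2
    · exact ⟨1, 1, fun hc => absurd hc hi⟩
  choose E α hE using each
  exact ⟨j, hj5, E, α, (hE j hj5).1 rfl, fun i hi hne => (hE i hi).2 hne⟩

theorem pairwise (h : GoodRoot z) (X Y : R) (hXY : IsCoprime X Y) (y : ℕ → R)
    (hy : ∀ i < 5, y i ∣ X + z ^ i * Y) (hl : ∀ i < 5, ¬ (1 - z) ∣ y i) :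
    ∀ i < 5, ∀ j < 5, i ≠ j → IsCoprime (y i) (y j) := by
  intro i hi j hj hij
  refine isCoprime_of_prime_dvd ?_ ?_
  · rintro ⟨h0, -⟩
    exact hl i hi (h0 ▸ dvd_zero _)
  · intro p hp h1 h2
    obtain ⟨u, hu⟩ := h.sub_pow i j hi hj hij
    have hnl : ¬ p ∣ (1 - z) := fun hc =>
      hl i hi (((hp.associated_of_dvd h.pl hc).symm.dvd).trans h1)
    obtain ⟨c, hc⟩ := h1.trans (hy i hi)
    obtain ⟨d, hd⟩ := h2.trans (hy j hj)
    have hY : p ∣ Y := by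
      have : p ∣ (1 - z) * (u * Y) := ⟨c - d, by linear_combination hc - hd - Y * hu⟩
      exact (Units.dvd_mul_left).mp ((hp.dvd_or_dvd this).resolve_left hnl)
    have hX : p ∣ X := by
      have : p ∣ X + z ^ i * Y := ⟨c, hc⟩
      exact (dvd_add_left (dvd_mul_of_dvd_right hY _)).mp this
    exact hp.not_isUnit (hXY.isUnit_of_dvd' hX hY)

theorem prod_form (h : GoodRoot z) (X Y : R) : X ^ 5 + Y ^ 5 =
    (X + z ^ 0 * Y) * (X + z ^ 1 * Y) * (X + z ^ 2 * Y) * (X + z ^ 3 * Y) * (X + z ^ 4 * Y) := by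
  have := h.cyc
  grind

theorem third (j : ℕ) : ∃ k l : ℕ, (k ≠ 0 ∧ k < 5 ∧ k ≠ j) ∧ (l ≠ 0 ∧ l < 5 ∧ l ≠ j) ∧ k ≠ l := by
  by_cases h1 : j = 1
  · exact ⟨2, 3, by omega⟩
  · by_cases h2 : j = 2
    · exact ⟨1, 3, by omega⟩
    · exact ⟨1, 2, by omega⟩

theorem two_not (h : GoodRoot z) : ¬ (1 - z) ∣ (2 : R) := by
  intro hc
  have := h.dvd_int 2 (by exact_mod_cast hc)
  omega

theorem descent_one (h : GoodRoot z) : ∀ (n : ℕ) (X Y Z : R), IsCoprime X Y →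
    X ^ 5 + Y ^ 5 = 2 * Z ^ 5 → (1 - z) ^ 2 ∣ X - Y → ¬ (1 - z) ^ n ∣ X - Y → False := by
  intro n
  induction n using Nat.strong_induction_on with
  | _ n ih =>
  intro X Y Z hXY heq hd2 hn
  have hl1 : (1 - z) ∣ X - Y := (dvd_pow_self _ (by norm_num)).trans hd2
  have hlY : ¬ (1 - z) ∣ Y := by
    intro hc
    have hX : (1 - z) ∣ X := (dvd_sub_left hc).mp hl1
    exact h.pl.not_isUnit (hXY.isUnit_of_dvd' hX hc)
  have hlx : ∀ i < 5, ¬ (1 - z) ∣ X + z ^ i * Y := by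
    intro i _ hc
    have hz : (1 - z) ∣ 1 - z ^ i := one_sub_dvd_one_sub_pow z i
    have : (1 - z) ∣ 2 * Y := by
      have e : 2 * Y = (X + z ^ i * Y) - (X - Y) + (1 - z ^ i) * Y := by ring
      rw [e]
      exact dvd_add (dvd_sub hc hl1) (dvd_mul_of_dvd_left hz _)
    rcases h.pl.dvd_or_dvd this with h1 | h1
    · exact h.two_not h1
    · exact hlY h1
  obtain ⟨j, hj, E, α, hEj, hE⟩ := h.factor 1 one_ne_zero (fun i => X + z ^ i * Y) Z 1
    (h.pairwise X Y hXY _ (fun i _ => dvd_rfl) hlx) (by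
      rw [← h.prod_form, heq]
      simp)
  simp only [pow_one] at hEj hE
  have hα : ∀ i < 5, ¬ (1 - z) ∣ α i := by
    intro i hi hc
    by_cases hij : i = j
    · subst hij
      apply hlx i hi
      rw [hEj]
      exact dvd_mul_of_dvd_right (dvd_pow hc (by norm_num)) _
    · apply hlx i hi
      rw [hE i hi hij]
      exact dvd_mul_of_dvd_right (dvd_pow hc (by norm_num)) _
  obtain ⟨C, hC⟩ := hd2
  -- step 1
  have hd5 : (1 - z) ^ 5 ∣ X - Y := by
    obtain ⟨i, k, ⟨hi0, hi5, hij⟩, ⟨hk0, hk5, hkj⟩, hik⟩ := third j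
    obtain ⟨vi, hvi⟩ := h.one_add i hi0 hi5
    obtain ⟨vk, hvk⟩ := h.one_add k hk0 hk5
    obtain ⟨u, hu⟩ := h.sub_pow k i hk5 hi5 hik.symm
    have hxi := hE i hi5 hij
    have hxk := hE k hk5 hkj
    have rel : ((E i * vk : Rˣ) : R) * α i ^ 5 - ((E k * vi : Rˣ) : R) * α k ^ 5
        = (X - Y) * ((1 - z) * u) := by
      push_cast
      rw [hvi, hvk, ← hu]
      linear_combination -(1 + z ^ k) * hxi + (1 + z ^ i) * hxk
    obtain ⟨w, hw⟩ := h.kummer (E i * vk) (E k * vi) 1 (α i) (α k) (hα i hi5) (by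
      refine ⟨C * u, ?_⟩
      push_cast at rel ⊢
      linear_combination rel + (1 - z) * u * hC)
    have rel2 : ((E k * vi : Rˣ) : R) * ((w * α i) ^ 5 - α k ^ 5) = (X - Y) * ((1 - z) * u) := by
      rw [← rel, hw]
      push_cast
      ring
    have hdd : (1 - z) ∣ (w * α i) ^ 5 - α k ^ 5 := by
      rw [← Units.dvd_mul_left (u := E k * vi), rel2]
      exact ⟨(X - Y) * u, by ring⟩
    obtain ⟨t, ht⟩ := h.adjust _ _ (hα k hk5) hdd
    have h6 := h.pow_congr 2 (by norm_num) _ _ ht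
    have : (z ^ t * α k) ^ 5 = α k ^ 5 := by
      rw [mul_pow, ← pow_mul, mul_comm t, pow_mul, h.z5]; simp
    rw [this, ← Units.dvd_mul_left (u := E k * vi), rel2] at h6
    have h7 : (1 - z) * (1 - z) ^ 5 ∣ (1 - z) * ((X - Y) * u) := by
      convert h6 using 1 <;> ring
    exact (Units.dvd_mul_right).mp ((mul_dvd_mul_iff_left h.pl.ne_zero).mp h7)
  obtain ⟨D, hD⟩ := hd5
  have hn6 : 6 ≤ n := by
    by_contra hc
    exact hn ((pow_dvd_pow _ (by omega)).trans ⟨D, hD⟩)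
  -- step 2
  have hj0 : j = 0 := by
    by_contra hj0
    obtain ⟨i, -, ⟨hi0, hi5, hij⟩, -, -⟩ := third j
    obtain ⟨vi, hvi⟩ := h.one_add i hi0 hi5
    obtain ⟨vj, hvj⟩ := h.one_add j hj0 hj
    have hxi := hE i hi5 hij
    obtain ⟨w, hw⟩ := h.kummer (E i * vj) (E j * vi) 2 (α i) (α j) (hα i hi5) (by
      refine ⟨(1 - z) ^ 2 * D * (z ^ j - z ^ i), ?_⟩
      push_cast
      rw [hvi, hvj]
      linear_combination -(1 + z ^ j) * hxi + (1 + z ^ i) * hEj + (z ^ j - z ^ i) * hD)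
    have hw' := congrArg Units.val hw
    push_cast at hw'
    apply h.no_two 1 (Or.inl rfl) (α j) (w * α i) (hα j hj)
    rw [← Units.dvd_mul_left (u := E j * vi)]
    refine ⟨-D * (z ^ j - z ^ i), ?_⟩
    push_cast
    rw [hvi, hvj] at *
    linear_combination (1 + z ^ j) * hxi - (1 + z ^ i) * hEj - (z ^ j - z ^ i) * hD + α i ^ 5 * hw'
  subst hj0
  -- step 3
  obtain ⟨v1, hv1⟩ := h.one_add 1 (by norm_num) (by norm_num)
  obtain ⟨v4, hv4⟩ := h.one_add 4 (by norm_num) (by norm_num)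
  have hx1 := hE 1 (by norm_num) (by norm_num)
  have hx4 := hE 4 (by norm_num) (by norm_num)
  obtain ⟨w1, hw1⟩ := h.kummer (E 1) (E 0 * v1) 1 (α 1) (α 0) (hα 1 (by norm_num)) (by
    have : (1 - z) ^ 3 ∣ 2 * ((E 1 : R) * α 1 ^ 5 - ((1 : ℤ) : R) * (E 0 * v1 : Rˣ) * α 0 ^ 5) := by
      refine ⟨(1 - z) ^ 2 * D * (1 - z), ?_⟩
      push_cast
      rw [hv1]
      linear_combination -2 * hx1 + (1 + z ^ 1) * hEj + (1 - z) * hD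
    exact h.pl.pow_dvd_of_dvd_mul_left 3 h.two_not this)
  obtain ⟨w4, hw4⟩ := h.kummer (E 4) (E 0 * v4) 1 (α 4) (α 0) (hα 4 (by norm_num)) (by
    have : (1 - z) ^ 3 ∣ 2 * ((E 4 : R) * α 4 ^ 5 - ((1 : ℤ) : R) * (E 0 * v4 : Rˣ) * α 0 ^ 5) := by
      refine ⟨(1 - z) ^ 2 * D * (1 - z ^ 4), ?_⟩
      push_cast
      rw [hv4]
      linear_combination -2 * hx4 + (1 + z ^ 4) * hEj + (1 - z ^ 4) * hD
    exact h.pl.pow_dvd_of_dvd_mul_left 3 h.two_not this)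
  have hw1' := congrArg Units.val hw1
  have hw4' := congrArg Units.val hw4
  push_cast at hw1' hw4'
  have e1 : X + z ^ 1 * Y = E 0 * (1 + z) * (w1 * α 1) ^ 5 := by
    rw [hx1, hw1', hv1]; ring
  have e4 : X + z ^ 4 * Y = E 0 * (1 + z ^ 4) * (w4 * α 4) ^ 5 := by
    rw [hx4, hw4', hv4]; ring
  have hz5 := h.z5
  have hcyc := h.cyc
  obtain ⟨y, hy⟩ := h.unit_z
  obtain ⟨t, ht⟩ := h.adjust (w1 * α 1) (w4 * α 4) (by
      rw [Units.dvd_mul_left]; exact hα 4 (by norm_num)) (by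
    rw [← Units.dvd_mul_left (u := E 0 * v1 * v4)]
    refine ⟨-(X - Y) * (z ^ 3 + z ^ 2 + z), ?_⟩
    push_cast
    rw [hv1, hv4]
    linear_combination -(1 + z ^ 4) * e1 + (1 + z) * e4)
  have e5 : (z ^ t * (w4 * α 4)) ^ 5 = (w4 * α 4) ^ 5 := by
    rw [mul_pow, ← pow_mul, mul_comm t, pow_mul, h.z5]; simp
  obtain ⟨u, hu⟩ := h.sub_pow 4 1 (by norm_num) (by norm_num) (by norm_num)
  refine ih (n - 3) (by omega) (w1 * α 1) (z ^ t * (w4 * α 4)) (α 0) ?_ ?_ ht ?_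
  · have hco := h.pairwise X Y hXY (fun i => X + z ^ i * Y) (fun i _ => dvd_rfl) hlx 1 (by norm_num) 4
      (by norm_num) (by norm_num)
    have hco : IsCoprime (X + z ^ 1 * Y) (X + z ^ 4 * Y) := hco
    rw [hx1, hx4] at hco
    have := (hco.of_mul_left_right).of_mul_right_right
    have h3 := (IsCoprime.pow_iff (by norm_num) (by norm_num)).mp this
    have h4 : IsCoprime ((w1 : R) * α 1) ((y ^ t * w4 : Rˣ) * α 4) := by
      rw [isCoprime_mul_unit_left_left w1.isUnit, isCoprime_mul_unit_left_right (y ^ t * w4).isUnit]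
      exact h3
    push_cast at h4
    rwa [hy, mul_assoc] at h4
  · rw [e5]
    have hne : ((E 0 * v1 * v4 : Rˣ) : R) ≠ 0 := Units.ne_zero _
    apply mul_left_cancel₀ hne
    push_cast
    rw [hv1, hv4]
    linear_combination -(1 + z ^ 4) * e1 - (1 + z) * e4 + (1 + z) * (1 + z ^ 4) * hEj + (Y - X) * hz5
  · intro hc
    have h9 := h.pow_congr (n - 3) (by omega) _ _ hc
    rw [e5, show n - 3 + 4 = n + 1 by omega, ← Units.dvd_mul_left (u := E 0 * v1 * v4)] at h9
    apply hn
    have h10 : (1 - z) * (1 - z) ^ n ∣ (1 - z) * ((X - Y) * u) := by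
      convert h9 using 1
      · ring
      · push_cast
        rw [hv1, hv4]
        linear_combination (1 + z ^ 4) * e1 - (1 + z) * e4 - (X - Y) * hu
    exact (Units.dvd_mul_right).mp ((mul_dvd_mul_iff_left h.pl.ne_zero).mp h10)


theorem descent_two (h : GoodRoot z) (s : ℕ) (hs : s = 1 ∨ s = 3) : ∀ (m : ℕ) (X Y Z : R) (e : Rˣ),
    IsCoprime X Y → ¬ (1 - z) ∣ Z → X ^ 5 + Y ^ 5 = e * 2 ^ s * (1 - z) ^ (5 * (m + 1)) * Z ^ 5 →
    False := by
  have hs0 : s ≠ 0 := by omega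
  have hl2 : ¬ (1 - z) ∣ (2 : R) ^ s := fun hc => h.two_not (h.pl.dvd_of_dvd_pow hc)
  have hl0 : (1 - z) ≠ 0 := h.pl.ne_zero
  have hz5 := h.z5
  obtain ⟨y, hy⟩ := h.unit_z
  have hu : ∀ i : ℕ, ∃ u : Rˣ, i ≠ 0 → i < 5 → 1 - z ^ i = (1 - z) * u := by
    intro i
    by_cases hi : i ≠ 0 ∧ i < 5
    · obtain ⟨u, hu⟩ := h.one_sub i hi.1 hi.2
      exact ⟨u, fun _ _ => hu⟩
    · exact ⟨1, fun h1 h2 => absurd ⟨h1, h2⟩ hi⟩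
  choose u hu using hu
  intro m
  induction m using Nat.strong_induction_on with
  | _ m ih =>
  intro X Y0 Z e hXY0 hZ heq0
  have hrhs : ¬ (1 - z) ∣ (e : R) * 2 ^ s * Z ^ 5 := by
    intro hc
    rcases h.pl.dvd_or_dvd hc with h1 | h1
    · rcases h.pl.dvd_or_dvd h1 with h2 | h2
      · exact h.not_dvd_unit e h2
      · exact hl2 h2
    · exact hZ (h.pl.dvd_of_dvd_pow h1)
  have hd : (1 - z) ∣ X ^ 5 + Y0 ^ 5 := by
    rw [heq0]
    exact dvd_mul_of_dvd_left (dvd_mul_of_dvd_right (dvd_pow_self _ (by omega)) _) _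
  have hlY0 : ¬ (1 - z) ∣ Y0 := by
    intro hc
    have h1 : (1 - z) ∣ X ^ 5 := (dvd_add_left (dvd_pow hc (by norm_num))).mp hd
    exact h.pl.not_isUnit (hXY0.isUnit_of_dvd' (h.pl.dvd_of_dvd_pow h1) hc)
  obtain ⟨k, hk⟩ := h.adjust X (-Y0) (by rwa [dvd_neg]) (by
    convert hd using 1; ring)
  obtain ⟨Y, hYdef⟩ : ∃ Y, Y = z ^ k * Y0 := ⟨_, rfl⟩
  have hlY : ¬ (1 - z) ∣ Y := by
    rw [hYdef, ← hy, ← Units.val_pow_eq_pow_val, Units.dvd_mul_left, hy]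
    exact hlY0
  have hXY : IsCoprime X Y := by
    rw [hYdef, ← hy, ← Units.val_pow_eq_pow_val, isCoprime_mul_unit_left_right (y ^ k).isUnit]
    exact hXY0
  have heq : X ^ 5 + Y ^ 5 = e * 2 ^ s * (1 - z) ^ (5 * (m + 1)) * Z ^ 5 := by
    rw [← heq0, hYdef, mul_pow, ← pow_mul, mul_comm k, pow_mul, h.z5]; simp
  have hk : (1 - z) ^ 2 ∣ X + Y := by
    rw [hYdef]; convert hk using 1; ring
  clear hYdef heq0 hXY0 hlY0 hd
  obtain ⟨C, hC⟩ := hk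
  have hxi : ∀ i, i ≠ 0 → i < 5 → X + z ^ i * Y = (1 - z) * ((1 - z) * C - u i * Y) := by
    intro i h0 h5
    linear_combination hC - Y * hu i h0 h5
  have hyi : ∀ i, i ≠ 0 → i < 5 → ¬ (1 - z) ∣ (1 - z) * C - u i * Y := by
    intro i h0 h5 hc
    have h1 := (dvd_sub_right (Dvd.intro C rfl)).mp hc
    rw [Units.dvd_mul_left] at h1
    exact hlY h1
  have hprod := h.prod_form X Y
  rw [heq, hxi 1 (by norm_num) (by norm_num), hxi 2 (by norm_num) (by norm_num),
    hxi 3 (by norm_num) (by norm_num), hxi 4 (by norm_num) (by norm_num)] at hprod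
  rw [pow_zero, one_mul] at hprod
  -- m is positive
  obtain ⟨M, rfl⟩ : ∃ M, m = M + 1 := by
    rcases Nat.eq_zero_or_pos m with hm | hm
    · exfalso
      subst hm
      apply hrhs
      rw [hC] at hprod
      refine ⟨C * (((1 - z) * C - u 1 * Y) * ((1 - z) * C - u 2 * Y) * ((1 - z) * C - u 3 * Y)
        * ((1 - z) * C - u 4 * Y)), ?_⟩
      apply mul_left_cancel₀ (pow_ne_zero 5 hl0)
      linear_combination hprod
    · exact ⟨m - 1, by omega⟩
  have hprod2 : (X + Y) * (((1 - z) * C - u 1 * Y) * ((1 - z) * C - u 2 * Y)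
      * ((1 - z) * C - u 3 * Y) * ((1 - z) * C - u 4 * Y))
      = (1 - z) ^ (5 * M + 6) * (e * 2 ^ s * Z ^ 5) := by
    apply mul_left_cancel₀ (pow_ne_zero 4 hl0)
    rw [show 5 * (M + 1 + 1) = 4 + (5 * M + 6) by ring, pow_add (1 - z) 4] at hprod
    linear_combination -hprod
  have hdv : (1 - z) ^ (5 * M + 6) ∣ X + Y := by
    refine h.pl.pow_dvd_of_dvd_mul_right _ ?_ (Dvd.intro _ hprod2.symm)
    intro hc
    rcases h.pl.dvd_or_dvd hc with hc | hc
    · rcases h.pl.dvd_or_dvd hc with hc | hc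
      · rcases h.pl.dvd_or_dvd hc with hc | hc
        · exact hyi 1 (by norm_num) (by norm_num) hc
        · exact hyi 2 (by norm_num) (by norm_num) hc
      · exact hyi 3 (by norm_num) (by norm_num) hc
    · exact hyi 4 (by norm_num) (by norm_num) hc
  obtain ⟨y0, hy0⟩ := hdv
  have hprod3 : y0 * ((1 - z) * C - u 1 * Y) * ((1 - z) * C - u 2 * Y)
      * ((1 - z) * C - u 3 * Y) * ((1 - z) * C - u 4 * Y) = e * 2 ^ s * Z ^ 5 := by
    apply mul_left_cancel₀ (pow_ne_zero (5 * M + 6) hl0)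
    rw [hy0] at hprod2
    linear_combination hprod2
  have hly0 : ¬ (1 - z) ∣ y0 := by
    intro hc
    apply hrhs
    rw [← hprod3]
    simp only [mul_assoc]
    exact dvd_mul_of_dvd_left hc _
  have hCy : (1 - z) * C = (1 - z) ^ (5 * M + 5) * y0 := by
    apply mul_left_cancel₀ hl0
    rw [show 5 * M + 6 = (5 * M + 5) + 1 by ring, pow_succ] at hy0
    linear_combination hy0 - hC
  obtain ⟨f, hf0, hfi⟩ : ∃ f : ℕ → R, f 0 = y0 ∧ ∀ i, i ≠ 0 → f i = (1 - z) * C - u i * Y :=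
    ⟨fun i => if i = 0 then y0 else (1 - z) * C - u i * Y, by simp, fun i hi => by simp [hi]⟩
  have hfl : ∀ i < 5, ¬ (1 - z) ∣ f i := by
    intro i hi
    by_cases h0 : i = 0
    · subst h0; rwa [hf0]
    · rw [hfi i h0]; exact hyi i h0 hi
  have hpw := h.pairwise X Y hXY f (by
    intro i hi
    by_cases h0 : i = 0
    · subst h0
      rw [hf0, pow_zero, one_mul, hy0]
      exact dvd_mul_left _ _
    · rw [hfi i h0, hxi i h0 hi]
      exact dvd_mul_left _ _) hfl
  obtain ⟨j, hj, E, α, hEj, hE⟩ := h.factor s hs0 f Z e hpw (by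
    rw [hf0, hfi 1 (by norm_num), hfi 2 (by norm_num), hfi 3 (by norm_num), hfi 4 (by norm_num)]
    exact hprod3)
  have hα : ∀ i < 5, ¬ (1 - z) ∣ α i := by
    intro i hi hc
    by_cases hij : i = j
    · subst hij
      apply hfl i hi
      rw [hEj]
      exact dvd_mul_of_dvd_right (dvd_pow hc (by norm_num)) _
    · apply hfl i hi
      rw [hE i hi hij]
      exact dvd_mul_of_dvd_right (dvd_pow hc (by norm_num)) _
  have rel : ∀ i k, i ≠ 0 → k ≠ 0 → f i * u k - f k * u i = (1 - z) ^ (5 * M + 5) * y0 * (u k - u i) := by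
    intro i k hi hk
    rw [hfi i hi, hfi k hk, ← hCy]
    ring
  have hj0 : j = 0 := by
    by_contra hj0
    obtain ⟨i, -, ⟨hi0, hi5, hij⟩, -, -⟩ := third j
    have r := rel i j hi0 hj0
    rw [hE i hi5 hij, hEj, show 5 * M + 5 = 5 * M + 2 + 3 by ring, pow_add] at r
    obtain ⟨w, hw⟩ := h.kummer (E i * u j) (E j * u i) (2 ^ s) (α i) (α j) (hα i hi5) (by
      refine ⟨(1 - z) ^ (5 * M + 2) * y0 * (u j - u i), ?_⟩
      push_cast
      linear_combination r)
    have hw' := congrArg Units.val hw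
    push_cast at hw'
    apply h.no_two s hs (α j) (w * α i) (hα j hj)
    rw [← Units.dvd_mul_left (u := E j * u i)]
    refine ⟨-(1 - z) ^ (5 * M) * y0 * (u j - u i), ?_⟩
    push_cast
    rw [show 5 * M + 2 = 2 + 5 * M by ring, pow_add] at r
    linear_combination -r + α i ^ 5 * hw'
  subst hj0
  have r := rel 1 4 (by norm_num) (by norm_num)
  have hEj' : y0 = E 0 * 2 ^ s * α 0 ^ 5 := by rw [← hf0, hEj]
  rw [hE 1 (by norm_num) (by norm_num), hE 4 (by norm_num) (by norm_num)] at r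
  obtain ⟨w, hw⟩ := h.kummer (E 1 * u 4) (E 4 * u 1) 1 (α 1) (α 4) (hα 1 (by norm_num)) (by
    refine ⟨(1 - z) ^ (5 * M + 2) * y0 * (u 4 - u 1), ?_⟩
    rw [show 5 * M + 5 = 5 * M + 2 + 3 by ring, pow_add] at r
    push_cast
    linear_combination r)
  have hw' := congrArg Units.val hw
  push_cast at hw'
  obtain ⟨q, hq⟩ := h.sub_pow 1 4 (by norm_num) (by norm_num) (by norm_num)
  have hq' : (u 4 : R) - u 1 = q := by
    apply mul_left_cancel₀ hl0
    linear_combination hq - hu 4 (by norm_num) (by norm_num) + hu 1 (by norm_num) (by norm_num)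
  refine ih M (by omega) (w * α 1) (-α 4) (α 0) (E 0 * q * (E 4 * u 1)⁻¹) ?_ (hα 0 (by norm_num)) ?_
  · have hco := hpw 1 (by norm_num) 4 (by norm_num) (by norm_num)
    rw [hE 1 (by norm_num) (by norm_num), hE 4 (by norm_num) (by norm_num)] at hco
    have := (hco.of_mul_left_right).of_mul_right_right
    have h3 := (IsCoprime.pow_iff (by norm_num) (by norm_num)).mp this
    rw [isCoprime_mul_unit_left_left w.isUnit]
    exact h3.neg_right
  · have hne : ((E 4 * u 1 : Rˣ) : R) ≠ 0 := Units.ne_zero _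
    apply mul_left_cancel₀ hne
    have hinv : ((E 4 * u 1 : Rˣ) : R) * (((E 4 * u 1)⁻¹ : Rˣ) : R) = 1 := Units.mul_inv _
    rw [Units.val_mul (E 0 * q)]
    rw [hq', hEj'] at r
    rw [show 5 * (M + 1) = 5 * M + 5 by ring]
    push_cast at hinv ⊢
    linear_combination r - α 1 ^ 5 * hw' - (E 0 * q * 2 ^ s * (1 - z) ^ (5 * M + 5) * α 0 ^ 5) * hinv

theorem mod25 (U W A : ℤ) (hA : A = 2 ∨ A = 8) (he : U ^ 5 + 1 = A * W ^ 5) (hW : ¬ (5 : ℤ) ∣ W) :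
    (A = 2 ∧ (5 : ℤ) ∣ U - 1) ∨ (A = 8 ∧ ((5 : ℤ) ∣ U - 2 ∨ (5 : ℤ) ∣ U - 3)) := by
  have key2 : ∀ u w : ZMod 25, u ^ 5 + 1 = 2 * w ^ 5 → 5 * w = 0 ∨ 5 * (u - 1) = 0 := by
    decide +kernel
  have key8 : ∀ u w : ZMod 25, u ^ 5 + 1 = 8 * w ^ 5 → 5 * w = 0 ∨ 5 * (u - 2) = 0 ∨ 5 * (u - 3) = 0 := by
    decide +kernel
  have conv : ∀ t : ℤ, 5 * (t : ZMod 25) = 0 → (5 : ℤ) ∣ t := by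
    intro t ht
    have := (ZMod.intCast_zmod_eq_zero_iff_dvd (5 * t) 25).mp (by exact_mod_cast ht)
    omega
  rcases hA with rfl | rfl
  · left
    refine ⟨rfl, ?_⟩
    rcases key2 U W (by exact_mod_cast congrArg (Int.cast : ℤ → ZMod 25) he) with h1 | h1
    · exact absurd (conv _ h1) hW
    · exact conv _ (by exact_mod_cast h1)
  · right
    refine ⟨rfl, ?_⟩
    rcases key8 U W (by exact_mod_cast congrArg (Int.cast : ℤ → ZMod 25) he) with h1 | h1 | h1
    · exact absurd (conv _ h1) hW
    · exact Or.inl (conv _ (by exact_mod_cast h1))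
    · exact Or.inr (conv _ (by exact_mod_cast h1))

theorem case8 (h : GoodRoot z) (U W : ℤ) (he : U ^ 5 + 1 = 8 * W ^ 5)
    (hU : (5 : ℤ) ∣ U - 2 ∨ (5 : ℤ) ∣ U - 3) : False := by
  have hodd : (2 : ℤ) ∣ U + 1 := by
    rcases Int.even_or_odd U with hE | ⟨k, hk⟩
    · exfalso
      have h1 : Even (U ^ 5) := hE.pow_of_ne_zero (by norm_num)
      obtain ⟨a, ha⟩ := h1
      omega
    · omega
  have hl : ∀ i < 5, ¬ (1 - z) ∣ (U : R) + z ^ i * 1 := by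
    intro i _ hc
    have hz : (1 - z) ∣ 1 - z ^ i := one_sub_dvd_one_sub_pow z i
    have h1 : (1 - z) ∣ ((U + 1 : ℤ) : R) := by
      have e : ((U + 1 : ℤ) : R) = ((U : R) + z ^ i * 1) + (1 - z ^ i) := by push_cast; ring
      rw [e]
      exact dvd_add hc hz
    have := h.dvd_int _ h1
    omega
  have heR : (U : R) ^ 5 + 1 ^ 5 = 8 * (W : R) ^ 5 := by
    rw [one_pow]
    exact_mod_cast congrArg (Int.cast : ℤ → R) he
  have hpw := h.pairwise (U : R) 1 isCoprime_one_right _ (fun i _ => dvd_rfl) hl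
  obtain ⟨j, hj, E, α, hEj, hE⟩ := h.factor 3 (by norm_num) (fun i => (U : R) + z ^ i * 1) W 1
    hpw (by
      rw [← h.prod_form, heR, Units.val_one]
      ring)
  have hj0 : j = 0 := by
    by_contra hj0
    have hco := hpw j hj 0 (by norm_num) hj0
    refine h.two.not_isUnit (hco.isUnit_of_dvd' ?_ ?_)
    · rw [hEj]
      exact ⟨E j * 4 * α j ^ 5, by ring⟩
    · obtain ⟨c, hc⟩ := hodd
      refine ⟨(c : R), ?_⟩
      have : ((U + 1 : ℤ) : R) = ((2 * c : ℤ) : R) := by rw [hc]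
      push_cast at this
      rw [pow_zero, one_mul, this]
  subst hj0
  have h1 : (U : R) + z ^ 1 * 1 = E 1 * α 1 ^ 5 := hE 1 (by norm_num) (by norm_num)
  obtain ⟨y, hy⟩ := h.unit_z
  obtain ⟨v, hv⟩ := h.one_add 1 (by norm_num) (by norm_num)
  rw [pow_one] at hv
  obtain ⟨a, b, w, hw⟩ := h.unit_form y v hy hv (E 1)
  have hw' := congrArg Units.val hw
  push_cast at hw'
  rw [hy, hv] at hw'
  obtain ⟨n, -, c, hc⟩ := h.pow_int ((w : R) * α 1)
  obtain ⟨X, hX⟩ := expand z a b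
  obtain ⟨k1, k2, k3, k4⟩ := h.coef4 (n ^ 5 * 2 ^ b * 48 - 48 * (U + 1))
    (n ^ 5 * 2 ^ b * -(48 * a + 24 * b) + 48)
    (n ^ 5 * 2 ^ b * (6 * (b * (b - 1) + 4 * a * b + 4 * a * (a - 1))))
    (n ^ 5 * 2 ^ b * -(8 * a * (a - 1) * (a - 2) + 12 * a * (a - 1) * b + 6 * a * b * (b - 1)
        + b * (b - 1) * (b - 2))) (by
      refine ⟨-48 * z ^ a * (1 + z) ^ b * (1 - z) * c - n ^ 5 * X, ?_⟩
      push_cast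
      linear_combination -48 * h1 - 48 * α 1 ^ 5 * hw' - 48 * z ^ a * (1 + z) ^ b * hc - (n : R) ^ 5 * hX)
  have key : ∀ m u a b : ZMod 5, (u = 2 ∨ u = 3) → m * 48 - 48 * (u + 1) = 0 →
      m * -(48 * a + 24 * b) + 48 = 0 → m * (6 * (b * (b - 1) + 4 * a * b + 4 * a * (a - 1))) = 0 →
      m * -(8 * a * (a - 1) * (a - 2) + 12 * a * (a - 1) * b + 6 * a * b * (b - 1)
        + b * (b - 1) * (b - 2)) = 0 → False := by
    decide +kernel
  have conv : ∀ t : ℤ, (5 : ℤ) ∣ t → (t : ZMod 5) = 0 := fun t ht =>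
    (ZMod.intCast_zmod_eq_zero_iff_dvd t 5).mpr (by exact_mod_cast ht)
  refine key ((n ^ 5 * 2 ^ b : ℤ) : ZMod 5) (U : ZMod 5) (a : ZMod 5) (b : ZMod 5) ?_ ?_ ?_ ?_ ?_
  · rcases hU with h1 | h1
    · left; have := conv _ h1; push_cast at this; linear_combination this
    · right; have := conv _ h1; push_cast at this; linear_combination this
  · have := conv _ k1; push_cast at this ⊢; exact this
  · have := conv _ k2; push_cast at this ⊢; exact this
  · have := conv _ k3; push_cast at this ⊢; exact this
  · have := conv _ k4; push_cast at this ⊢; exact this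

theorem main_int [CharZero R] (h : GoodRoot z) (U W : ℤ) (s : ℕ) (hs : s = 1 ∨ s = 3)
    (he : U ^ 5 + 1 = 2 ^ s * W ^ 5) : W = 0 ∨ (s = 1 ∧ U = 1) := by
  by_cases hW0 : W = 0
  · exact Or.inl hW0
  right
  have heR : (U : R) ^ 5 + 1 ^ 5 = 2 ^ s * (W : R) ^ 5 := by
    rw [one_pow]
    exact_mod_cast congrArg (Int.cast : ℤ → R) he
  by_cases hW : (5 : ℤ) ∣ W
  · exfalso
    obtain ⟨k, W', hW', hk⟩ : ∃ k : ℕ, ∃ W' : ℤ, ¬ (5 : ℤ) ∣ W' ∧ W = 5 ^ k * W' := by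
      obtain ⟨c, hc, hc'⟩ := (Int.finiteMultiplicity_iff.mpr ⟨by norm_num, hW0⟩ :
        FiniteMultiplicity (5 : ℤ) W).exists_eq_pow_mul_and_not_dvd
      exact ⟨_, c, hc', hc⟩
    have hk0 : k ≠ 0 := by
      rintro rfl
      rw [pow_zero, one_mul] at hk
      exact hW' (hk ▸ hW)
    obtain ⟨p, hp⟩ := h.five
    refine h.descent_two s hs (4 * k - 1) U 1 W' (p ^ (5 * k)) isCoprime_one_right
      (fun hc => hW' (h.dvd_int _ hc)) ?_
    rw [heR, hk]
    push_cast
    rw [hp, show 5 * (4 * k - 1 + 1) = 4 * (5 * k) by omega, pow_mul (1 - z), mul_pow _ (W' : R),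
      ← pow_mul _ k, mul_comm k 5, mul_pow _ (p : R)]
    ring
  · rcases mod25 U W (2 ^ s) (by rcases hs with rfl | rfl <;> norm_num) he hW with ⟨h1, h2⟩ | ⟨h1, h2⟩
    · have hs1 : s = 1 := by
        rcases hs with rfl | rfl
        · rfl
        · norm_num at h1
      refine ⟨hs1, ?_⟩
      subst hs1
      by_contra hU
      have hne : (U : R) - 1 ≠ 0 := by
        intro hc
        apply hU
        exact_mod_cast sub_eq_zero.mp hc
      obtain ⟨n, hn⟩ := FiniteMultiplicity.of_not_isUnit h.pl.not_isUnit hne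
      refine h.descent_one (n + 1) U 1 W isCoprime_one_right (by simpa using heR) ?_ hn
      have := h.int_dvd _ h2
      push_cast at this
      exact (pow_dvd_pow _ (by norm_num)).trans this
    · exfalso
      rw [h1] at he
      exact h.case8 U W he h2

end GoodRoot

theorem orderOf_two_zmod_five : orderOf ((2 : ℕ) : ZMod 5) = 4 := by
  have h2 : Fact (Nat.Prime 2) := ⟨Nat.prime_two⟩
  have a : ¬ ((2 : ℕ) : ZMod 5) ^ 2 ^ 1 = 1 := by clear h2; decide
  have b : ((2 : ℕ) : ZMod 5) ^ 2 ^ (1 + 1) = 1 := by clear h2; decide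
  have h' := orderOf_eq_prime_pow a b
  simpa using h'

open NumberField in
theorem goodRoot_cyclotomic (K : Type) [Field K] [NumberField K] [hK : IsCyclotomicExtension {5} ℚ K] :
    ∃ z : 𝓞 K, GoodRoot z := by
  have h5 : Fact (Nat.Prime 5) := ⟨Nat.prime_five⟩
  have h2 : Fact (Nat.Prime 2) := ⟨Nat.prime_two⟩
  have hpid : IsPrincipalIdealRing (𝓞 K) := IsCyclotomicExtension.Rat.five_pid K
  have hζ := IsCyclotomicExtension.zeta_spec 5 ℚ K
  refine ⟨hζ.toInteger, ?_, ?_, ?_, ?_, ?_⟩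
  · have := hζ.toInteger_isPrimitiveRoot.geom_sum_eq_zero (by norm_num)
    simp only [Finset.sum_range_succ, Finset.sum_range_zero] at this
    linear_combination this
  · have := hζ.zeta_sub_one_prime'.neg
    rwa [neg_sub] at this
  · intro x
    have hx : x ∈ Algebra.adjoin ℤ {hζ.toInteger} := by
      rw [IsCyclotomicExtension.Rat.adjoin_singleton_eq_top hζ]; trivial
    induction hx using Algebra.adjoin_induction with
    | mem y hy => 
      rw [Set.mem_singleton_iff] at hy
      subst hy
      exact ⟨1, -1, by push_cast; ring⟩
    | algebraMap r => exact ⟨r, by simp⟩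
    | add x y _ _ hx hy =>
      obtain ⟨n, hn⟩ := hx
      obtain ⟨m, hm⟩ := hy
      exact ⟨n + m, by convert! dvd_add hn hm using 1; push_cast; ring⟩
    | mul x y _ _ hx hy =>
      obtain ⟨n, c, hn⟩ := hx
      obtain ⟨m, d, hm⟩ := hy
      exact ⟨n * m, c * y + n * d, by push_cast; linear_combination hn * y + n * hm⟩
  · have hfr : Module.finrank ℚ K = 4 := by
      rw [IsCyclotomicExtension.finrank (n := 5) K
        (Polynomial.cyclotomic.irreducible_rat (by norm_num)), Nat.totient_prime Nat.prime_five]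
    have hfrZ : Module.finrank ℤ (𝓞 K) = 4 := by
      rw [RingOfIntegers.rank, hfr]
    have hn2 : Ideal.absNorm (Ideal.span {(2 : 𝓞 K)}) = 16 := by
      have := Algebra.norm_algebraMap_of_basis (RingOfIntegers.basis K) (2 : ℤ)
      rw [Ideal.absNorm_span_singleton]
      have h2 : (2 : 𝓞 K) = algebraMap ℤ (𝓞 K) 2 := by simp
      rw [h2, this, ← Module.finrank_eq_card_basis (RingOfIntegers.basis K), hfrZ]
      norm_num
    have hnu : ¬ IsUnit (2 : 𝓞 K) := by
      intro hu
      rw [Ideal.span_singleton_eq_top.2 hu] at hn2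
      simp at hn2
    obtain ⟨π, hπ, c, hc⟩ := WfDvdMonoid.exists_irreducible_factor hnu two_ne_zero
    have hπp : Prime π := hπ.prime
    have hP : (Ideal.span {π}).IsPrime := (Ideal.span_singleton_prime hπp.ne_zero).2 hπp
    have hl : (Ideal.span {π}).LiesOver (Ideal.span {((2 : ℕ) : ℤ)}) := by
      constructor
      have hm : (Ideal.span {((2 : ℕ) : ℤ)}).IsMaximal :=
        PrincipalIdealRing.isMaximal_of_irreducible (Int.prime_two.irreducible)
      refine hm.eq_of_le ?_ ?_
      · exact (hP.comap (algebraMap ℤ (𝓞 K))).ne_top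
      · rw [Ideal.span_singleton_le_iff_mem]
        change algebraMap ℤ (𝓞 K) ((2 : ℕ) : ℤ) ∈ Ideal.span {π}
        rw [Ideal.mem_span_singleton]
        exact ⟨c, by simpa using hc⟩
    have hi := IsCyclotomicExtension.Rat.inertiaDeg_eq_of_not_dvd 2 K (Ideal.span {π}) (m := 5) (by norm_num)
    have hPm : (Ideal.span {π}).IsMaximal := PrincipalIdealRing.isMaximal_of_irreducible hπ
    have hpm : (Ideal.span {((2 : ℕ) : ℤ)}).IsMaximal :=
        PrincipalIdealRing.isMaximal_of_irreducible (Int.prime_two.irreducible)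
    have hN := Ideal.absNorm_eq_pow_inertiaDeg' (Ideal.span {π}) Nat.prime_two
    rw [Ideal.inertiaDeg'_eq_inertiaDeg, hi, orderOf_two_zmod_five] at hN
    have hcu : IsUnit c := by
      rw [hc, ← Ideal.span_singleton_mul_span_singleton, map_mul, hN] at hn2
      have : Ideal.absNorm (Ideal.span {c}) = 1 := by omega
      rwa [Ideal.absNorm_eq_one_iff, Ideal.span_singleton_eq_top] at this
    rw [hc]
    exact (associated_mul_unit_right π c hcu).prime hπp
  · have hr : Units.rank K = 1 := by
      rw [Units.rank, InfinitePlace.card_eq_nrRealPlaces_add_nrComplexPlaces,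
        IsCyclotomicExtension.Rat.nrRealPlaces_eq_zero K (n := 5) (by norm_num),
        IsCyclotomicExtension.Rat.nrComplexPlaces_eq_totient_div_two 5 K, Nat.totient_prime Nat.prime_five]
    have hto : Units.torsionOrder K = 10 := by
      rw [IsCyclotomicExtension.Rat.torsionOrder_eq (n := 5)]
      decide
    refine ⟨Units.fundSystem K ⟨0, by omega⟩, fun ε => ?_⟩
    obtain ⟨⟨x, e⟩, hx, -⟩ := Units.exist_unique_eq_mul_prod K ε
    refine ⟨e ⟨0, by omega⟩, ?_⟩
    have hu : Unique (Fin (Units.rank K)) := by rw [hr]; infer_instance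
    have hs : ∏ i, Units.fundSystem K i ^ e i = Units.fundSystem K ⟨0, by omega⟩ ^ e ⟨0, by omega⟩ :=
      Fintype.prod_eq_single _ (fun i hi => absurd (Fin.ext (by have := i.2; simp; omega)) hi)
    rw [hx]
    simp only
    rw [hs, mul_assoc, ← zpow_add, add_neg_cancel, zpow_zero, mul_one]
    have : (x : (𝓞 K)ˣ) ∈ rootsOfUnity (Units.torsionOrder K) (𝓞 K) := by
      rw [Units.rootsOfUnity_eq_torsion]
      exact x.2
    rw [hto] at this
    simpa [mem_rootsOfUnity] using this

theorem key_int (U W : ℤ) (s : ℕ) (hs : s = 1 ∨ s = 3) (he : U ^ 5 + 1 = 2 ^ s * W ^ 5) :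
    W = 0 ∨ (s = 1 ∧ U = 1) := by
  have hcyc : IsCyclotomicExtension {5} ℚ (CyclotomicField 5 ℚ) := by
    have h := CyclotomicField.isCyclotomicExtension 5 ℚ
    convert! h
  have hnf : NumberField (CyclotomicField 5 ℚ) := IsCyclotomicExtension.numberField {5} ℚ _
  have hpid : IsPrincipalIdealRing (NumberField.RingOfIntegers (CyclotomicField 5 ℚ)) :=
    IsCyclotomicExtension.Rat.five_pid _
  obtain ⟨z, hz⟩ := goodRoot_cyclotomic (CyclotomicField 5 ℚ)
  exact hz.main_int U W s hs he

-- the two reduced equations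
theorem red_odd (a g e : ℤ) (hg : g = 1 ∨ g = -1) (h : a ^ 5 + g + 2 * e ^ 5 * g ^ 3 = 0) :
    e = 0 ∨ a = g := by
  rcases hg with rfl | rfl
  · rcases key_int a (-e) 1 (Or.inl rfl) (by linear_combination h) with h1 | ⟨_, h1⟩
    · left; linarith
    · right; exact h1
  · rcases key_int (-a) (-e) 1 (Or.inl rfl) (by linear_combination -h) with h1 | ⟨_, h1⟩
    · left; linarith
    · right; linarith

theorem red_even (a g e : ℤ) (hg : g = 1 ∨ g = -1) (h : 8 * a ^ 5 + g + e ^ 5 * g ^ 3 = 0) :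
    a = 0 := by
  rcases hg with rfl | rfl
  · rcases key_int e (-a) 3 (Or.inr rfl) (by linear_combination h) with h1 | ⟨h1, _⟩
    · linarith
    · omega
  · rcases key_int e a 3 (Or.inr rfl) (by linear_combination -h) with h1 | ⟨h1, _⟩
    · exact h1
    · omega

/-- common structure: `c * e ^ 2 + b + k * e * b ^ 3 = 0` gives `b = e ^ 2 * g`. -/
theorem red_b (c k e b : ℤ) (he : e ≠ 0) (h : c * e ^ 2 + b + k * e * b ^ 3 = 0) :
    ∃ g, b = e ^ 2 * g ∧ c + g + k * e ^ 5 * g ^ 3 = 0 := by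
  obtain ⟨f, hf⟩ : e ∣ b := ⟨-(c * e + k * b ^ 3), by linear_combination h⟩
  subst hf
  have h1 : c * e + f + k * e ^ 3 * f ^ 3 = 0 := by
    apply mul_left_cancel₀ he
    linear_combination h
  obtain ⟨g, hg⟩ : e ∣ f := ⟨-(c + k * e ^ 2 * f ^ 3), by linear_combination h1⟩
  subst hg
  refine ⟨g, by ring, ?_⟩
  apply mul_left_cancel₀ he
  linear_combination h1

theorem stmt_6 (x y : ℤ) :
    x ^ 4 + x * y + 2 * y ^ 3 = 0 ↔ (x = 0 ∧ y = 0) ∨ (x = -1 ∧ y = -1) := by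
  constructor
  swap
  · rintro (⟨rfl, rfl⟩ | ⟨rfl, rfl⟩) <;> norm_num
  intro h
  by_cases hx : x = 0
  · subst hx
    left
    refine ⟨rfl, ?_⟩
    have : y ^ 3 = 0 := by linarith
    exact pow_eq_zero_iff (by norm_num) |>.1 this
  right
  have hgne : Int.gcd x y ≠ 0 := by
    intro h0
    exact hx (Int.gcd_eq_zero_iff.1 h0).1
  obtain ⟨d, a, b, hd, hab, rfl, rfl⟩ : ∃ d a b : ℤ, d ≠ 0 ∧ IsCoprime a b ∧ x = d * a ∧ y = d * b := by
    obtain ⟨a, b, hab, h1, h2⟩ := Int.exists_gcd_one (Nat.pos_of_ne_zero hgne)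
    refine ⟨Int.gcd x y, a, b, by exact_mod_cast hgne, Int.isCoprime_iff_gcd_eq_one.2 hab, ?_, ?_⟩
    · rw [mul_comm]; exact h1
    · rw [mul_comm]; exact h2
  have ha : a ≠ 0 := by rintro rfl; simp at hx
  have h1 : d ^ 2 * a ^ 4 + a * b + 2 * d * b ^ 3 = 0 := by
    apply mul_left_cancel₀ (pow_ne_zero 2 hd)
    linear_combination h
  have hadvd : a ∣ 2 * d := by
    have : a ∣ (2 * d) * b ^ 3 := ⟨-(d ^ 2 * a ^ 3 + b), by linear_combination h1⟩
    exact (IsCoprime.pow_right hab).dvd_of_dvd_mul_right this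
  have unit_of : ∀ g : ℤ, g ∣ a ^ 5 → g ∣ b → g = 1 ∨ g = -1 := by
    intro g hg1 hg2
    exact Int.isUnit_iff.1 ((IsCoprime.pow_left hab : IsCoprime (a ^ 5) b).isUnit_of_dvd' hg1 hg2)
  rcases Int.even_or_odd' a with ⟨a', rfl | hao⟩
  · exfalso
    obtain ⟨e, rfl⟩ : a' ∣ d := by
      obtain ⟨c, hc⟩ := hadvd
      exact ⟨c, by linarith⟩
    have ha' : a' ≠ 0 := by rintro rfl; simp at ha
    have he : e ≠ 0 := by rintro rfl; simp at hd
    have h2 : 8 * a' ^ 5 * e ^ 2 + b + 1 * e * b ^ 3 = 0 := by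
      apply mul_left_cancel₀ (mul_ne_zero two_ne_zero ha')
      linear_combination h1
    obtain ⟨g, rfl, hg⟩ := red_b _ _ _ _ he h2
    have hgu := unit_of g ⟨-4 * (1 + e ^ 5 * g ^ 2), by linear_combination 4 * hg⟩ ⟨e ^ 2, by ring⟩
    exact ha' (red_even a' g e hgu (by linear_combination hg))
  · obtain ⟨e, rfl⟩ : a ∣ d := by
      have hc : IsCoprime a 2 := ⟨1, -a', by rw [hao]; ring⟩
      exact hc.dvd_of_dvd_mul_left hadvd
    have he : e ≠ 0 := by rintro rfl; simp at hd
    have h2 : a ^ 5 * e ^ 2 + b + 2 * e * b ^ 3 = 0 := by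
      apply mul_left_cancel₀ ha
      linear_combination h1
    obtain ⟨g, rfl, hg⟩ := red_b _ _ _ _ he h2
    have hgu := unit_of g ⟨-(1 + 2 * e ^ 5 * g ^ 2), by linear_combination hg⟩ ⟨e ^ 2, by ring⟩
    rcases red_odd a g e hgu hg with h3 | rfl
    · exact absurd h3 he
    · have he5 : e ^ 5 = (-1) ^ 5 := by
        rcases hgu with rfl | rfl <;> linarith
      have he1 : e = -1 := (Odd.strictMono_pow (by decide : Odd 5)).injective he5
      subst he1
      rcases hgu with rfl | rfl <;> norm_num
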